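/- arXiv:2105.08320 — 2 statements merged into one kernel-verified Lean document; each statement's English description precedes it below -/
import Mathlib

section
/- Two copies of the identity channel on a d-dimensional quantum system are S₀-compatible if and only if S₀ is broadcastable; in particular, if S₀ contains two noncommuting states, the pair (id, id) is S₀-incompatible, so χ_incomp(id, id) = 2, while for S₀ consisting of d mutually orthogonal pure states the pair is S₀-compatible, giving χ_comp(id, id) = d. -/
open Matrix ComplexOrder

noncomputable section

def IsState {n : Type*} [Fintype n] [DecidableEq n] (ρ : Matrix n n ℂ) : Prop :=
  ρ.PosSemidef ∧ ρ.trace = 1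

/-- Partial trace over the second factor. -/
def ptr2 {d : ℕ} (M : Matrix (Fin d × Fin d) (Fin d × Fin d) ℂ) :
    Matrix (Fin d) (Fin d) ℂ :=
  Matrix.of fun i j => ∑ k, M (i, k) (j, k)

/-- Partial trace over the first factor. -/
def ptr1 {d : ℕ} (M : Matrix (Fin d × Fin d) (Fin d × Fin d) ℂ) :
    Matrix (Fin d) (Fin d) ℂ :=
  Matrix.of fun i j => ∑ k, M (k, i) (k, j)

/-- `S₀` is broadcastable: there is a channel `B : S(H) → S(H⊗H)` (given by Kraus
operators) whose both marginals equal `ρ` for every `ρ ∈ S₀`. -/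
def Broadcastable {d : ℕ} (S₀ : Set (Matrix (Fin d) (Fin d) ℂ)) : Prop :=
  ∃ (r : ℕ) (K : Fin r → Matrix (Fin d × Fin d) (Fin d) ℂ),
    (∑ i, (K i)ᴴ * K i = 1) ∧
    ∀ ρ ∈ S₀, ptr2 (∑ i, K i * ρ * (K i)ᴴ) = ρ ∧ ptr1 (∑ i, K i * ρ * (K i)ᴴ) = ρ

/-- `S₀`-compatibility of two copies of the identity channel: a joint channel (given by
Kraus operators) whose two partial-trace marginals agree with the identity on `S₀`. -/
def IdPairSCompat {d : ℕ} (S₀ : Set (Matrix (Fin d) (Fin d) ℂ)) : Prop :=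
  ∃ (r : ℕ) (K : Fin r → Matrix (Fin d × Fin d) (Fin d) ℂ),
    (∑ i, (K i)ᴴ * K i = 1) ∧
    ∀ ρ ∈ S₀, ptr2 (∑ i, K i * ρ * (K i)ᴴ) = ρ ∧ ptr1 (∑ i, K i * ρ * (K i)ᴴ) = ρ

/-- Incompatibility dimension of the pair (id, id). -/
def chiIncompId (d : ℕ) : ℕ :=
  sInf {k : ℕ | ∃ S₀ : Set (Matrix (Fin d) (Fin d) ℂ),
    (∀ ρ ∈ S₀, IsState ρ) ∧ ¬ IdPairSCompat S₀ ∧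
    k = Module.finrank ℝ (vectorSpan ℝ S₀) + 1}

/-- Compatibility dimension of the pair (id, id). -/
def chiCompId (d : ℕ) : ℕ :=
  sSup {k : ℕ | ∃ S₀ : Set (Matrix (Fin d) (Fin d) ℂ),
    (∀ ρ ∈ S₀, IsState ρ) ∧ IdPairSCompat S₀ ∧
    k = Module.finrank ℝ (vectorSpan ℝ S₀) + 1}


lemma nb_step {m n : Type*} [Fintype m] [Fintype n] [DecidableEq m] [DecidableEq n]
    (V : Matrix m n ℂ) (hV : Vᴴ * V = 1) (E : Matrix n n ℂ → Matrix m m ℂ)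
    (hmul : ∀ X Y, E (X * Y) = E X * E Y) (hstar : ∀ X, E Xᴴ = (E X)ᴴ)
    (ω s X : Matrix n n ℂ) (hs : ω = s * sᴴ)
    (hω : ∀ X, (ω * (Vᴴ * E X * V)).trace = (ω * X).trace)
    (h1 : (ω * (Xᴴ * (Vᴴ * E X * V))).trace = (ω * (Xᴴ * X)).trace)
    (h2 : (ω * ((Vᴴ * E Xᴴ * V) * X)).trace = (ω * (Xᴴ * X)).trace) :
    V * X * s = E X * V * s := by
  have key : (((V * X - E X * V) * s)ᴴ * ((V * X - E X * V) * s)).trace = 0 := by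
    have e : (V * X - E X * V)ᴴ * (V * X - E X * V)
        = Xᴴ * X - Xᴴ * (Vᴴ * E X * V) - (Vᴴ * E Xᴴ * V) * X + Vᴴ * E (Xᴴ * X) * V := by
      rw [hmul, hstar]
      have : Xᴴ * X = Xᴴ * (Vᴴ * V) * X := by rw [hV]; simp
      rw [this]
      simp only [conjTranspose_sub, conjTranspose_mul, Matrix.sub_mul, Matrix.mul_sub, Matrix.mul_assoc]
      abel
    rw [conjTranspose_mul, Matrix.mul_assoc, ← Matrix.mul_assoc _ _ s, e, trace_mul_comm,
      Matrix.mul_assoc, ← hs, trace_mul_comm]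
    simp only [Matrix.mul_add, Matrix.mul_sub, trace_add, trace_sub]
    rw [h1, h2, hω]; ring
  have := trace_conjTranspose_mul_self_eq_zero_iff.mp key
  rw [Matrix.sub_mul, sub_eq_zero] at this
  exact this

lemma nb_side {m n : Type*} [Fintype m] [Fintype n] [DecidableEq m] [DecidableEq n]
    (V : Matrix m n ℂ) (hV : Vᴴ * V = 1) (E : Matrix n n ℂ → Matrix m m ℂ)
    (hmul : ∀ X Y, E (X * Y) = E X * E Y) (hstar : ∀ X, E Xᴴ = (E X)ᴴ)
    (ρ ω s A C : Matrix n n ℂ) (hs : ω = s * sᴴ)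
    (hA : A * ω = ρ) (hA' : ω * Aᴴ = ρ) (hC : A = C * ω)
    (hω : ∀ X, (ω * (Vᴴ * E X * V)).trace = (ω * X).trace)
    (hρ : ∀ X, (ρ * (Vᴴ * E X * V)).trace = (ρ * X).trace) :
    V * A * s = E A * V * s ∧ V * Aᴴ * s = E Aᴴ * V * s := by
  have hωh : ωᴴ = ω := by rw [hs]; simp
  have s1 : V * A * s = E A * V * s := by
    apply nb_step V hV E hmul hstar ω s A hs hω
    · rw [← Matrix.mul_assoc, hA', hρ, ← hA', Matrix.mul_assoc]
    · rw [← Matrix.mul_assoc, trace_mul_comm, ← Matrix.mul_assoc, hA, hρ, ← hA, Matrix.mul_assoc,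
        trace_mul_comm, Matrix.mul_assoc]
  refine ⟨s1, ?_⟩
  have f : (Vᴴ * E A * V) * ω = A * ω := by
    rw [hs, ← Matrix.mul_assoc, ← Matrix.mul_assoc A]
    congr 1
    rw [Matrix.mul_assoc, Matrix.mul_assoc, ← Matrix.mul_assoc (E A), ← s1, ← Matrix.mul_assoc,
      ← Matrix.mul_assoc, hV, Matrix.one_mul]
  have f2 : (Vᴴ * E A * V) * Aᴴ = A * Aᴴ := by
    have : Aᴴ = ω * Cᴴ := by rw [hC]; simp [hωh]
    rw [this, ← Matrix.mul_assoc, f, Matrix.mul_assoc]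
  have f3 : A * (Vᴴ * E Aᴴ * V) = A * Aᴴ := by
    have := congrArg conjTranspose f2
    simpa [hstar, Matrix.mul_assoc] using this
  apply nb_step V hV E hmul hstar ω s Aᴴ hs hω
  · rw [conjTranspose_conjTranspose, f3]
  · rw [conjTranspose_conjTranspose, f2]

lemma nb_core {m n : Type*} [Fintype m] [Fintype n] [DecidableEq m] [DecidableEq n]
    (V : Matrix m n ℂ) (hV : Vᴴ * V = 1) (E F : Matrix n n ℂ → Matrix m m ℂ)
    (hmul : ∀ X Y, E (X * Y) = E X * E Y) (hstar : ∀ X, E Xᴴ = (E X)ᴴ)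
    (hmulF : ∀ X Y, F (X * Y) = F X * F Y) (hstarF : ∀ X, F Xᴴ = (F X)ᴴ)
    (hcomm : ∀ X Y, E X * F Y = F Y * E X)
    (ρ ω s A C : Matrix n n ℂ) (hs : ω = s * sᴴ)
    (hA : A * ω = ρ) (hA' : ω * Aᴴ = ρ) (hC : A = C * ω)
    (hω : ∀ X, (ω * (Vᴴ * E X * V)).trace = (ω * X).trace)
    (hρ : ∀ X, (ρ * (Vᴴ * E X * V)).trace = (ρ * X).trace)
    (hωF : ∀ X, (ω * (Vᴴ * F X * V)).trace = (ω * X).trace)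
    (hρF : ∀ X, (ρ * (Vᴴ * F X * V)).trace = (ρ * X).trace) :
    ρ * ω = ω * ρ := by
  obtain ⟨e1, e2⟩ := nb_side V hV E hmul hstar ρ ω s A C hs hA hA' hC hω hρ
  obtain ⟨f1, f2⟩ := nb_side V hV F hmulF hstarF ρ ω s A C hs hA hA' hC hωF hρF
  have norm : sᴴ * (Aᴴ * A) * s = sᴴ * (A * Aᴴ) * s := by
    have l : (V * A * s)ᴴ * (V * A * s) = sᴴ * (Aᴴ * A) * s := by
      have : sᴴ * (Aᴴ * A) * s = sᴴ * (Aᴴ * (Vᴴ * V) * A) * s := by rw [hV]; simp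
      rw [this]; simp [Matrix.mul_assoc]
    have r : (V * Aᴴ * s)ᴴ * (V * Aᴴ * s) = sᴴ * (A * Aᴴ) * s := by
      have : sᴴ * (A * Aᴴ) * s = sᴴ * (A * (Vᴴ * V) * Aᴴ) * s := by rw [hV]; simp
      rw [this]; simp [Matrix.mul_assoc]
    rw [← l, ← r]
    have q : (V * A * s)ᴴ * (V * A * s) = (E A * V * s)ᴴ * (F A * V * s) := by
      rw [← e1, ← f1]
    have q' : (V * Aᴴ * s)ᴴ * (V * Aᴴ * s) = (F Aᴴ * V * s)ᴴ * (E Aᴴ * V * s) := by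
      rw [← e2, ← f2]
    rw [q, q']
    simp only [conjTranspose_mul, hstar, hstarF, conjTranspose_conjTranspose, Matrix.mul_assoc]
    rw [← Matrix.mul_assoc (E A)ᴴ, ← hstar, hcomm, Matrix.mul_assoc]
  have norm' : (ω * (Aᴴ * A)).trace = (ω * (A * Aᴴ)).trace := by
    have := congrArg trace norm
    rwa [trace_mul_comm, ← Matrix.mul_assoc s, ← hs, trace_mul_comm (sᴴ * (A * Aᴴ)),
      ← Matrix.mul_assoc s, ← hs] at this
  have hD : (((A - Aᴴ)ᴴ * s)ᴴ * ((A - Aᴴ)ᴴ * s)).trace = 0 := by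
    rw [conjTranspose_mul, conjTranspose_conjTranspose, Matrix.mul_assoc, trace_mul_comm,
      Matrix.mul_assoc, Matrix.mul_assoc, ← hs, ← Matrix.mul_assoc, trace_mul_comm]
    simp only [conjTranspose_sub, conjTranspose_conjTranspose, Matrix.sub_mul, Matrix.mul_sub,
      trace_sub]
    have a1 : (ω * (Aᴴ * Aᴴ)).trace = (ω * (Aᴴ * A)).trace := by
      rw [← Matrix.mul_assoc, hA', ← hA, Matrix.mul_assoc, trace_mul_comm, Matrix.mul_assoc]
    have a2 : (ω * (A * A)).trace = (ω * (Aᴴ * A)).trace := by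
      rw [← Matrix.mul_assoc, trace_mul_comm, ← Matrix.mul_assoc, hA, ← hA', Matrix.mul_assoc]
    rw [a1, a2, ← norm']; ring
  have z := trace_conjTranspose_mul_self_eq_zero_iff.mp hD
  have z1 : ω * (A - Aᴴ) = 0 := by
    have := congrArg conjTranspose z
    rw [conjTranspose_mul, conjTranspose_conjTranspose, conjTranspose_zero] at this
    rw [hs, Matrix.mul_assoc, this, Matrix.mul_zero]
  rw [Matrix.mul_sub, sub_eq_zero, hA'] at z1
  conv_lhs => rw [← z1, Matrix.mul_assoc, hA]
lemma exists_factor {n : Type*} [Fintype n] [DecidableEq n] (M ρ : Matrix n n ℂ)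
    (h : ∀ x, M *ᵥ x = 0 → ρ *ᵥ x = 0) : ∃ C, ρ = C * M := by
  have hk : LinearMap.ker (Matrix.toLin' M) ≤ LinearMap.ker (Matrix.toLin' ρ) := by
    intro x hx
    simp only [LinearMap.mem_ker, toLin'_apply] at hx ⊢
    exact h x hx
  let g := (LinearMap.ker (toLin' M)).liftQ (toLin' ρ) hk ∘ₗ
    (toLin' M).quotKerEquivRange.symm.toLinearMap
  obtain ⟨c, hc⟩ := g.exists_extend
  refine ⟨LinearMap.toMatrix' c, ?_⟩
  apply Matrix.toLin'.injective
  rw [Matrix.toLin'_mul, Matrix.toLin'_toMatrix']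
  refine LinearMap.ext fun x => ?_
  have := LinearMap.congr_fun hc ⟨toLin' M x, LinearMap.mem_range_self _ _⟩
  simp only [LinearMap.comp_apply, Submodule.subtype_apply] at this
  rw [LinearMap.comp_apply, this]
  simp only [g, LinearMap.comp_apply]
  have e : (toLin' M).quotKerEquivRange (Submodule.Quotient.mk x)
    = ⟨toLin' M x, LinearMap.mem_range_self _ _⟩ := rfl
  rw [← e]
  simp

lemma trace_ptr2 {d : ℕ} (M : Matrix (Fin d × Fin d) (Fin d × Fin d) ℂ)
    (X : Matrix (Fin d) (Fin d) ℂ) :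
    (ptr2 M * X).trace = (M * kroneckerMap (· * ·) X (1 : Matrix (Fin d) (Fin d) ℂ)).trace := by
  simp only [Matrix.trace, diag_apply, mul_apply, ptr2, of_apply, kroneckerMap_apply,
    Fintype.sum_prod_type, Matrix.one_apply, Finset.sum_mul, mul_ite, mul_one, mul_zero,
    Finset.sum_ite_eq, Finset.sum_ite_eq', Finset.mem_univ, if_true]
  refine Finset.sum_congr rfl fun i _ => Finset.sum_comm

lemma trace_ptr1 {d : ℕ} (M : Matrix (Fin d × Fin d) (Fin d × Fin d) ℂ)
    (X : Matrix (Fin d) (Fin d) ℂ) :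
    (ptr1 M * X).trace = (M * kroneckerMap (· * ·) (1 : Matrix (Fin d) (Fin d) ℂ) X).trace := by
  have e : ∀ i j : Fin d, ∀ f : Fin d → Fin d → ℂ,
      (∑ a, ∑ b, f a b * ((if a = i then (1:ℂ) else 0) * X b j)) = ∑ b, f i b * X b j := by
    intro i j f
    rw [Finset.sum_eq_single i]
    · simp
    · intro b _ hb; simp [hb]
    · simp
  simp only [Matrix.trace, diag_apply, mul_apply, ptr1, of_apply, kroneckerMap_apply,
    Fintype.sum_prod_type, Matrix.one_apply, e, Finset.sum_mul]
  rw [Finset.sum_comm' (t' := Finset.univ) (s' := fun _ => Finset.univ) (by simp)]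
  conv_rhs => rw [Finset.sum_comm]
  rw [Finset.sum_comm]
  refine Finset.sum_congr rfl fun i _ => Finset.sum_comm

lemma stack_trace {r : ℕ} {m n : Type*} [Fintype m] [Fintype n] [DecidableEq m] [DecidableEq n]
    (K : Fin r → Matrix m n ℂ) (ρ : Matrix n n ℂ) (X : Matrix m m ℂ) :
    (ρ * ((Matrix.of fun (p : Fin r × m) j => K p.1 p.2 j)ᴴ *
      kroneckerMap (· * ·) (1 : Matrix (Fin r) (Fin r) ℂ) X *
        (Matrix.of fun (p : Fin r × m) j => K p.1 p.2 j))).trace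
      = ((∑ i, K i * ρ * (K i)ᴴ) * X).trace := by
  have : ((Matrix.of fun (p : Fin r × m) j => K p.1 p.2 j)ᴴ *
      kroneckerMap (· * ·) (1 : Matrix (Fin r) (Fin r) ℂ) X *
        (Matrix.of fun (p : Fin r × m) j => K p.1 p.2 j))
      = ∑ i, (K i)ᴴ * X * K i := by
    ext a b
    have e : ∀ i : Fin r, ∀ j : m, ∀ f : Fin r → m → ℂ,
      (∑ a, ∑ b, f a b * ((if a = i then (1:ℂ) else 0) * X b j)) = ∑ b, f i b * X b j := by
      intro i j f
      rw [Finset.sum_eq_single i]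
      · simp
      · intro b _ hb; simp [hb]
      · simp
    simp only [mul_apply, Matrix.sum_apply, Fintype.sum_prod_type, Matrix.one_apply,
      kroneckerMap_apply, e, conjTranspose_apply, of_apply]
  rw [this, Matrix.mul_sum, Matrix.sum_mul, trace_sum, trace_sum]
  refine Finset.sum_congr rfl fun i _ => ?_
  rw [Matrix.mul_assoc (K i * ρ), Matrix.mul_assoc (K i), Matrix.trace_mul_comm (K i)]
  simp only [Matrix.mul_assoc]

open scoped MatrixOrder Matrix.Norms.L2Operator in
lemma psd_factor {d : ℕ} {ω : Matrix (Fin d) (Fin d) ℂ} (h : ω.PosSemidef) :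
    ∃ B : Matrix (Fin d) (Fin d) ℂ, ω = B * Bᴴ := by
  obtain ⟨B, hB⟩ := CStarAlgebra.nonneg_iff_eq_star_mul_self.mp h.nonneg
  refine ⟨Bᴴ, ?_⟩
  rw [conjTranspose_conjTranspose]
  exact hB

lemma no_broadcast {d : ℕ} (S₀ : Set (Matrix (Fin d) (Fin d) ℂ)) (hS : ∀ ρ ∈ S₀, IsState ρ)
    (h : IdPairSCompat S₀) (ρ σ : Matrix (Fin d) (Fin d) ℂ) (hρ : ρ ∈ S₀) (hσ : σ ∈ S₀) :
    ρ * σ = σ * ρ := by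
  obtain ⟨r, K, hK, hB⟩ := h
  have pρ := (hS ρ hρ).1
  have pσ := (hS σ hσ).1
  have pω := pρ.add pσ
  set ω := ρ + σ with hω
  obtain ⟨C, hC⟩ : ∃ C, ρ = C * (ω * ω) := by
    apply exists_factor
    intro x hx
    have h1 : ω *ᵥ x = 0 := by
      rw [← conjTranspose_mul_self_mulVec_eq_zero, pω.1.eq]; exact hx
    rw [← pω.dotProduct_mulVec_zero_iff, hω, add_mulVec, dotProduct_add] at h1
    rw [← pρ.dotProduct_mulVec_zero_iff]
    have a := pρ.dotProduct_mulVec_nonneg x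
    have b := pσ.dotProduct_mulVec_nonneg x
    exact ((add_eq_zero_iff_of_nonneg a b).mp h1).1
  obtain ⟨B, hBs⟩ := psd_factor pω
  let V : Matrix (Fin r × (Fin d × Fin d)) (Fin d) ℂ := Matrix.of fun p j => K p.1 p.2 j
  let E : Matrix (Fin d) (Fin d) ℂ →
      Matrix (Fin r × (Fin d × Fin d)) (Fin r × (Fin d × Fin d)) ℂ :=
    fun X => kroneckerMap (· * ·) (1 : Matrix (Fin r) (Fin r) ℂ)
      (kroneckerMap (· * ·) X (1 : Matrix (Fin d) (Fin d) ℂ))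
  let F : Matrix (Fin d) (Fin d) ℂ →
      Matrix (Fin r × (Fin d × Fin d)) (Fin r × (Fin d × Fin d)) ℂ :=
    fun X => kroneckerMap (· * ·) (1 : Matrix (Fin r) (Fin r) ℂ)
      (kroneckerMap (· * ·) (1 : Matrix (Fin d) (Fin d) ℂ) X)
  have tE : ∀ τ ∈ S₀, ∀ X, (τ * (Vᴴ * E X * V)).trace = (τ * X).trace := by
    intro τ hτ X
    rw [stack_trace, ← trace_ptr2, (hB τ hτ).1]
  have tF : ∀ τ ∈ S₀, ∀ X, (τ * (Vᴴ * F X * V)).trace = (τ * X).trace := by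
    intro τ hτ X
    rw [stack_trace, ← trace_ptr1, (hB τ hτ).2]
  have key : ρ * ω = ω * ρ := by
    refine nb_core V ?_ E F ?_ ?_ ?_ ?_ ?_ ρ ω B (C * ω) C hBs ?_ ?_ rfl ?_ (tE ρ hρ) ?_ (tF ρ hρ)
    · rw [← hK]
      ext a b
      simp [V, mul_apply, Matrix.sum_apply, Fintype.sum_prod_type]
    · intro X Y; simp only [E, ← mul_kronecker_mul, Matrix.one_mul]
    · intro X; simp only [E, conjTranspose_kronecker, conjTranspose_one]
    · intro X Y; simp only [F, ← mul_kronecker_mul, Matrix.one_mul]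
    · intro X; simp only [F, conjTranspose_kronecker, conjTranspose_one]
    · intro X Y; simp only [E, F, ← mul_kronecker_mul, Matrix.one_mul, Matrix.mul_one]
    · rw [Matrix.mul_assoc, ← hC]
    · have := congrArg conjTranspose hC
      rw [pρ.1.eq] at this
      rw [this]
      simp [pω.1.eq, Matrix.mul_assoc]
    · intro X; rw [hω, Matrix.add_mul, Matrix.add_mul, trace_add, trace_add, tE ρ hρ, tE σ hσ]
    · intro X; rw [hω, Matrix.add_mul, Matrix.add_mul, trace_add, trace_add, tF ρ hρ, tF σ hσ]
  rw [hω, Matrix.mul_add, Matrix.add_mul] at key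
  exact add_left_cancel key

lemma compat_of_diag {d : ℕ} (U : Matrix (Fin d) (Fin d) ℂ) (hU : Uᴴ * U = 1) (hU' : U * Uᴴ = 1)
    (S₀ : Set (Matrix (Fin d) (Fin d) ℂ)) (h : ∀ ρ ∈ S₀, ∃ v, ρ = U * diagonal v * Uᴴ) :
    IdPairSCompat S₀ := by
  have col : ∀ k l, ∑ i, star (U i k) * U i l = if k = l then 1 else 0 := by
    intro k l
    have := congrFun (congrFun hU k) l
    simpa [mul_apply, Matrix.one_apply] using this
  have row : ∀ k l, ∑ i, U k i * star (U l i) = if k = l then 1 else 0 := by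
    intro k l
    have := congrFun (congrFun hU' k) l
    simpa [mul_apply, Matrix.one_apply] using this
  have col' : ∀ k, ∑ i, U i k * star (U i k) = 1 := by
    intro k
    have := col k k
    simp only [if_true] at this
    rw [← this]
    exact Finset.sum_congr rfl fun i _ => mul_comm _ _
  refine ⟨d, fun k => Matrix.of fun p l => U p.1 k * U p.2 k * star (U l k), ?_, ?_⟩
  · ext l l'
    simp only [Matrix.sum_apply, mul_apply, conjTranspose_apply, of_apply, Fintype.sum_prod_type,
      Matrix.one_apply, ← row]
    refine Finset.sum_congr rfl fun k _ => ?_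
    calc _ = (∑ i, U i k * star (U i k)) * (∑ j, U j k * star (U j k)) *
          (U l k * star (U l' k)) := by
          rw [Finset.sum_mul_sum, Finset.sum_mul]
          refine Finset.sum_congr rfl fun i _ => ?_
          rw [Finset.sum_mul]
          refine Finset.sum_congr rfl fun j _ => ?_
          simp only [star_mul', star_star]
          ring
      _ = _ := by rw [col']; ring
  · intro ρ hρ
    obtain ⟨v, rfl⟩ := h ρ hρ
    have hd : ∀ k, ∑ x, (∑ y, star (U y k) * (U * diagonal v * Uᴴ) y x) * U x k = v k := by
      intro k
      have : Uᴴ * (U * diagonal v * Uᴴ) * U = diagonal v := by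
        rw [Matrix.mul_assoc, Matrix.mul_assoc, Matrix.mul_assoc, hU, ← Matrix.mul_assoc, hU]
        simp
      have := congrFun (congrFun this k) k
      rw [diagonal_apply_eq] at this
      rw [← this, Matrix.mul_apply]
      refine Finset.sum_congr rfl fun x _ => ?_
      rw [Matrix.mul_apply (M := Uᴴ)]
      rfl
    have main : ∀ k (p q : Fin d × Fin d),
        ((Matrix.of fun (p : Fin d × Fin d) l => U p.1 k * U p.2 k * star (U l k)) *
          (U * diagonal v * Uᴴ) *
          (Matrix.of fun (p : Fin d × Fin d) l => U p.1 k * U p.2 k * star (U l k))ᴴ) p q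
        = (U p.1 k * star (U q.1 k)) * (U p.2 k * star (U q.2 k)) * v k := by
      intro k p q
      rw [← hd k, mul_apply, Finset.mul_sum]
      refine Finset.sum_congr rfl fun x _ => ?_
      rw [mul_apply, Finset.sum_mul, Finset.sum_mul, Finset.mul_sum]
      refine Finset.sum_congr rfl fun y _ => ?_
      simp only [of_apply, conjTranspose_apply, star_mul', star_star]
      ring
    have entry : ∀ i j, (U * diagonal v * Uᴴ) i j = ∑ k, U i k * star (U j k) * v k := by
      intro i j
      rw [mul_apply]
      refine Finset.sum_congr rfl fun k _ => ?_
      rw [mul_diagonal, conjTranspose_apply]; ring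
    constructor
    · ext i j
      rw [entry]
      simp only [ptr2, of_apply, Matrix.sum_apply, main]
      rw [Finset.sum_comm]
      refine Finset.sum_congr rfl fun k _ => ?_
      rw [← Finset.sum_mul, ← Finset.mul_sum, col', mul_one]
    · ext i j
      rw [entry]
      simp only [ptr1, of_apply, Matrix.sum_apply, main]
      rw [Finset.sum_comm]
      refine Finset.sum_congr rfl fun k _ => ?_
      rw [← Finset.sum_mul, ← Finset.sum_mul, col', one_mul]

lemma compat_of_subsingleton {d : ℕ} (S₀ : Set (Matrix (Fin d) (Fin d) ℂ))
    (hS : ∀ ρ ∈ S₀, IsState ρ) (h : S₀.Subsingleton) : IdPairSCompat S₀ := by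
  rcases S₀.eq_empty_or_nonempty with rfl | ⟨ρ, hρ⟩
  · exact compat_of_diag 1 (by simp) (by simp) _ (by simp)
  · have hh := (hS ρ hρ).1.1
    refine compat_of_diag (hh.eigenvectorUnitary : Matrix (Fin d) (Fin d) ℂ) ?_ ?_ S₀ ?_
    · exact (Matrix.mem_unitaryGroup_iff').mp hh.eigenvectorUnitary.2
    · exact (Matrix.mem_unitaryGroup_iff).mp hh.eigenvectorUnitary.2
    · intro σ hσ
      rw [h hσ hρ]
      refine ⟨_, hh.spectral_theorem.trans (Unitary.conjStarAlgAut_apply _ _)⟩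

lemma incomp_two {d : ℕ} (hd : 2 ≤ d) : ∃ S₀ : Set (Matrix (Fin d) (Fin d) ℂ),
    (∀ ρ ∈ S₀, IsState ρ) ∧ ¬ IdPairSCompat S₀ ∧
    2 = Module.finrank ℝ (vectorSpan ℝ S₀) + 1 := by
  obtain ⟨n, rfl⟩ : ∃ n, d = n + 2 := ⟨d - 2, by omega⟩
  have st : ∀ u : Fin (n+2) → ℂ, (∑ i, u i * star (u i)) = 1 → IsState (vecMulVec u (star u)) := by
    intro u hu
    refine ⟨posSemidef_vecMulVec_self_star u, ?_⟩
    rw [← hu]; simp [Matrix.trace, vecMulVec_apply]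
  let u : Fin (n+2) → ℂ := Pi.single 0 1
  let w : Fin (n+2) → ℂ := Fin.cons (3/5) (Fin.cons (4/5) 0)
  have su : IsState (vecMulVec u (star u)) := by
    apply st; simp [u, Pi.single_apply]
  have sw : IsState (vecMulVec w (star w)) := by
    apply st
    have h3 : star (3 / 5 : ℂ) = 3 / 5 := by
      have := Complex.conj_ofReal (3 / 5); push_cast at this; exact this
    have h4 : star (4 / 5 : ℂ) = 4 / 5 := by
      have := Complex.conj_ofReal (4 / 5); push_cast at this; exact this
    simp only [w, Fin.sum_univ_succ, Fin.cons_zero, Fin.cons_succ, h3, h4, Pi.zero_apply,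
      zero_mul, Finset.sum_const_zero]
    norm_num
  have hne : vecMulVec u (star u) * vecMulVec w (star w)
      ≠ vecMulVec w (star w) * vecMulVec u (star u) := by
    intro h
    have := congrFun (congrFun h 0) 1
    simp [mul_apply, vecMulVec_apply, u, w, Fin.sum_univ_succ, Pi.single_apply] at this
  have hS : ∀ ρ ∈ ({vecMulVec u (star u), vecMulVec w (star w)} : Set (Matrix _ _ ℂ)), IsState ρ := by
    intro ρ hρ
    rcases hρ with rfl | rfl
    · exact su
    · exact sw
  refine ⟨_, hS, ?_, ?_⟩
  · intro h
    exact hne (no_broadcast _ hS h _ _ (by simp) (by simp))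
  · rw [vectorSpan_pair, finrank_span_singleton]
    intro h
    rw [vsub_eq_sub, sub_eq_zero] at h
    exact hne (by rw [h])

lemma comp_d {d : ℕ} (hd : 2 ≤ d) : ∃ S₀ : Set (Matrix (Fin d) (Fin d) ℂ),
    (∀ ρ ∈ S₀, IsState ρ) ∧ IdPairSCompat S₀ ∧
    d = Module.finrank ℝ (vectorSpan ℝ S₀) + 1 := by
  refine ⟨Set.range fun i : Fin d => diagonal (Pi.single i (1 : ℂ)), ?_, ?_, ?_⟩
  · rintro _ ⟨i, rfl⟩
    refine ⟨PosSemidef.diagonal ?_, ?_⟩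
    · intro j
      by_cases h : j = i
      · subst h; simp
      · simp [h]
    · simp [trace_diagonal, Pi.single_apply]
  · refine compat_of_diag 1 (by simp) (by simp) _ ?_
    rintro _ ⟨i, rfl⟩
    exact ⟨Pi.single i 1, by simp⟩
  · have li : LinearIndependent ℝ fun i : Fin d => (diagonal (Pi.single i (1 : ℂ)) : Matrix _ _ ℂ) := by
      rw [Fintype.linearIndependent_iff]
      intro g hg i
      have := congrFun (congrFun hg i) i
      simpa [Matrix.sum_apply, Pi.single_apply] using this
    rw [li.affineIndependent.finrank_vectorSpan (n := d - 1) (by simp; omega)]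
    omega

lemma finrank_span_le {d : ℕ} (S₀ : Set (Matrix (Fin d) (Fin d) ℂ))
    (hS : ∀ ρ ∈ S₀, ρ.IsHermitian) (hc : ∀ ρ ∈ S₀, ∀ σ ∈ S₀, ρ * σ = σ * ρ) :
    Module.finrank ℝ (Submodule.span ℝ S₀) ≤ d := by
  classical
  let T : S₀ → (EuclideanSpace ℂ (Fin d) →ₗ[ℂ] EuclideanSpace ℂ (Fin d)) :=
    fun ρ => (ρ : Matrix (Fin d) (Fin d) ℂ).toEuclideanLin
  have hT : ∀ i, (T i).IsSymmetric := fun i => isSymmetric_toEuclideanLin_iff.mpr (hS i i.2)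
  have hC : Pairwise (Function.onFun Commute T) := by
    intro a b _
    have := hc a a.2 b b.2
    refine LinearMap.ext fun x => ?_
    simp only [T, Module.End.mul_apply]
    ext i
    simp [this]
  have hI := LinearMap.IsSymmetric.directSum_isInternal_of_pairwise_commute hT hC
  let b := hI.collectedBasis (fun χ => Module.finBasis ℂ _)
  have : Fintype ((χ : S₀ → ℂ) × Fin (Module.finrank ℂ
    (⨅ j, Module.End.eigenspace (T j) (χ j) : Submodule ℂ (EuclideanSpace ℂ (Fin d))))) :=
    FiniteDimensional.fintypeBasisIndex b
  have hcard := Module.finrank_eq_card_basis b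
  rw [finrank_euclideanSpace_fin] at hcard
  -- eigenvector property, with real eigenvalues
  have hev : ∀ i, ∀ M ∈ Submodule.span ℝ S₀, ∃ c : ℝ,
      M.toEuclideanLin (b i) = (c : ℂ) • b i := by
    intro i M hM
    induction hM using Submodule.span_induction with
    | mem M hM =>
      have := hI.collectedBasis_mem (fun χ => Module.finBasis ℂ _) i
      have h2 := (Submodule.mem_iInf _).mp this ⟨M, hM⟩
      rw [Module.End.mem_eigenspace_iff] at h2
      have hr := (hT ⟨M, hM⟩).conj_eigenvalue_eq_self
        (Module.End.hasEigenvalue_of_hasEigenvector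
          ⟨Module.End.mem_eigenspace_iff.mpr h2, b.ne_zero i⟩)
      refine ⟨(i.1 ⟨M, hM⟩).re, ?_⟩
      rw [Complex.conj_eq_iff_re.mp hr]
      exact h2
    | zero => exact ⟨0, by simp⟩
    | add x y _ _ hx hy =>
      obtain ⟨a, ha⟩ := hx
      obtain ⟨c, hc⟩ := hy
      exact ⟨a + c, by rw [map_add, LinearMap.add_apply, ha, hc]; simp [add_smul]⟩
    | smul r x _ hx =>
      obtain ⟨a, ha⟩ := hx
      refine ⟨r * a, ?_⟩
      have : (r • x) = (r : ℂ) • x := by ext; simp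
      rw [this, map_smul, LinearMap.smul_apply, ha, smul_smul]; simp
  let f : Submodule.span ℝ S₀ →ₗ[ℝ] (_ → ℝ) :=
    { toFun := fun M i => (b.repr ((M : Matrix (Fin d) (Fin d) ℂ).toEuclideanLin (b i)) i).re
      map_add' := by intro x y; ext i; simp
      map_smul' := by
        intro r x; ext i
        have : (r • (x : Matrix (Fin d) (Fin d) ℂ)) = (r : ℂ) • (x : Matrix (Fin d) (Fin d) ℂ) := by
          ext; simp
        change (b.repr (toEuclideanLin (r • (x : Matrix (Fin d) (Fin d) ℂ)) (b i)) i).re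
          = r * (b.repr (toEuclideanLin (x : Matrix (Fin d) (Fin d) ℂ) (b i)) i).re
        rw [this, map_smul, LinearMap.smul_apply, map_smul, Finsupp.smul_apply, smul_eq_mul,
          Complex.re_ofReal_mul] }
  have hf : Function.Injective f := by
    rw [← LinearMap.ker_eq_bot, LinearMap.ker_eq_bot']
    rintro ⟨M, hM⟩ h0
    have : M.toEuclideanLin = 0 := by
      refine b.ext fun i => ?_
      obtain ⟨c, hc⟩ := hev i M hM
      have h1 := congrFun h0 i
      change (b.repr (toEuclideanLin M (b i)) i).re = 0 at h1
      rw [hc, map_smul, Finsupp.smul_apply, smul_eq_mul, Complex.re_ofReal_mul,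
        b.repr_self, Finsupp.single_eq_same, Complex.one_re, mul_one] at h1
      rw [hc, h1]; simp
    ext1
    simpa using this
  have := LinearMap.finrank_le_finrank_of_injective hf
  rw [Module.finrank_fintype_fun_eq_card, ← hcard] at this
  exact this

lemma comp_le {d : ℕ} (hd : 2 ≤ d) (S₀ : Set (Matrix (Fin d) (Fin d) ℂ))
    (hS : ∀ ρ ∈ S₀, IsState ρ) (h : IdPairSCompat S₀) :
    Module.finrank ℝ (vectorSpan ℝ S₀) + 1 ≤ d := by
  rcases S₀.eq_empty_or_nonempty with rfl | ⟨ρ, hρ⟩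
  · rw [vectorSpan_empty, finrank_bot]; omega
  · have h1 := finrank_span_le S₀ (fun ρ hρ => (hS ρ hρ).1.1)
      (fun ρ hρ σ hσ => no_broadcast S₀ hS h ρ σ hρ hσ)
    have lt : vectorSpan ℝ S₀ < Submodule.span ℝ S₀ := by
      refine lt_of_le_of_ne ?_ ?_
      · rw [vectorSpan_def, Submodule.span_le]
        rintro _ ⟨a, ha, b, hb, rfl⟩
        exact Submodule.sub_mem _ (Submodule.subset_span ha) (Submodule.subset_span hb)
      · intro he
        have hm : ρ ∈ vectorSpan ℝ S₀ := he ▸ Submodule.subset_span hρ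
        have hk : vectorSpan ℝ S₀ ≤ LinearMap.ker (Matrix.traceLinearMap (Fin d) ℝ ℂ) := by
          rw [vectorSpan_def, Submodule.span_le]
          rintro _ ⟨a, ha, b, hb, rfl⟩
          simp [(hS a ha).2, (hS b hb).2]
        have := hk hm
        simp [(hS ρ hρ).2] at this
    have := Submodule.finrank_lt_finrank_of_lt lt
    omega

/-- Two copies of the identity channel are `S₀`-compatible iff `S₀` is broadcastable;
if `S₀` contains two noncommuting states, the pair is `S₀`-incompatible; and
`χ_incomp(id,id) = 2`, `χ_comp(id,id) = d`. -/
theorem identity_channels_chi (d : ℕ) (hd : 2 ≤ d) :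
    (∀ S₀ : Set (Matrix (Fin d) (Fin d) ℂ), (∀ ρ ∈ S₀, IsState ρ) →
      (IdPairSCompat S₀ ↔ Broadcastable S₀)) ∧
    (∀ S₀ : Set (Matrix (Fin d) (Fin d) ℂ), (∀ ρ ∈ S₀, IsState ρ) →
      (∃ ρ ∈ S₀, ∃ σ ∈ S₀, ρ * σ ≠ σ * ρ) → ¬ IdPairSCompat S₀) ∧
    chiIncompId d = 2 ∧ chiCompId d = d := by
  refine ⟨fun _ _ => Iff.rfl, ?_, ?_, ?_⟩
  · rintro S₀ hS ⟨ρ, hρ, σ, hσ, hne⟩ h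
    exact hne (no_broadcast S₀ hS h ρ σ hρ hσ)
  · refine IsLeast.csInf_eq ⟨incomp_two hd, ?_⟩
    rintro k ⟨S₀, hS, hn, rfl⟩
    by_contra hlt
    have h0 : Module.finrank ℝ (vectorSpan ℝ S₀) = 0 := by omega
    rw [Submodule.finrank_eq_zero] at h0
    apply hn
    apply compat_of_subsingleton S₀ hS
    intro a ha b hb
    have := vsub_mem_vectorSpan ℝ ha hb
    rw [h0, Submodule.mem_bot, vsub_eq_sub, sub_eq_zero] at this
    exact this
  · refine IsGreatest.csSup_eq ⟨comp_d hd, ?_⟩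
    rintro k ⟨S₀, hS, hc, rfl⟩
    exact comp_le hd S₀ hS hc
end
end

section
/- Restriction to the equatorial disk is faithful for incompatibility: the noisy qubit observables A^{tx}, A^{ty} are incompatible (as observables on all qubit states) if and only if they are S_D-incompatible, where S_D = {(1/2)(I + v·σ) : |v| ≤ 1, v₃ = 0}, if and only if their restrictions to S_D are incompatible as observables on the disk state space S_D. -/
open Matrix ComplexOrder

noncomputable section

abbrev Mat2 := Matrix (Fin 2) (Fin 2) ℂ

def sigma1 : Mat2 := !![0, 1; 1, 0]
def sigma2 : Mat2 := !![0, -Complex.I; Complex.I, 0]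

def Atx (t : ℝ) (s : Bool) : Mat2 :=
  ((1 : ℂ) / 2) • ((1 : Mat2) + (if s then (1 : ℂ) else -1) • ((t : ℂ) • sigma1))

def Aty (t : ℝ) (s : Bool) : Mat2 :=
  ((1 : ℂ) / 2) • ((1 : Mat2) + (if s then (1 : ℂ) else -1) • ((t : ℂ) • sigma2))

def IsPOVM {ι : Type*} [Fintype ι] {n : Type*} [Fintype n] [DecidableEq n]
    (G : ι → Matrix n n ℂ) : Prop :=
  (∀ i, (G i).PosSemidef) ∧ ∑ i, G i = 1

/-- Membership of a Bloch vector in the equatorial unit disk. -/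
def inDisk (v : ℝ × ℝ) : Prop := Real.sqrt (v.1 ^ 2 + v.2 ^ 2) ≤ 1

/-- The qubit state with equatorial Bloch vector `v`. -/
def diskState (v : ℝ × ℝ) : Mat2 :=
  ((1 : ℂ) / 2) • ((1 : Mat2) + (v.1 : ℂ) • sigma1 + (v.2 : ℂ) • sigma2)

/-- The disk state space `S_D = {(1/2)(I + v·σ) : |v| ≤ 1, v₃ = 0}`. -/
def SD : Set Mat2 := {ρ | ∃ v : ℝ × ℝ, inDisk v ∧ ρ = diskState v}

/-- `A^{tx}` and `A^{ty}` are incompatible (full qubit compatibility). -/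
def FullIncompat (t : ℝ) : Prop :=
  ¬ ∃ G : Bool × Bool → Mat2, IsPOVM G ∧
    (∀ x, G (x, true) + G (x, false) = Atx t x) ∧
    (∀ y, G (true, y) + G (false, y) = Aty t y)

/-- `A^{tx}` and `A^{ty}` are `S_D`-incompatible: no joint POVM reproduces their
outcome probabilities on all states of the disk `S_D`. -/
def SDIncompat (t : ℝ) : Prop :=
  ¬ ∃ G : Bool × Bool → Mat2, IsPOVM G ∧
    ∀ ρ ∈ SD,
      (∀ x, (ρ * (G (x, true) + G (x, false))).trace = (ρ * Atx t x).trace) ∧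
      (∀ y, (ρ * (G (true, y) + G (false, y))).trace = (ρ * Aty t y).trace)

/-- The value on the disk state `v` of a disk effect with coefficients
`c = (c₀, c₁, c₂)`: `(c₀ + c₁v₁ + c₂v₂)/2`. -/
def diskVal (c : ℝ × ℝ × ℝ) (v : ℝ × ℝ) : ℝ :=
  (c.1 + c.2.1 * v.1 + c.2.2 * v.2) / 2

/-- A disk effect: its value lies in `[0,1]` on all of the disk. -/
def IsDiskEffect (c : ℝ × ℝ × ℝ) : Prop :=
  ∀ v : ℝ × ℝ, inDisk v → 0 ≤ diskVal c v ∧ diskVal c v ≤ 1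

/-- The restrictions of `A^{tx}`, `A^{ty}` to the disk state space are incompatible as
observables on `S_D`: no four-outcome disk observable has them as marginals. -/
def DiskIncompat (t : ℝ) : Prop :=
  ¬ ∃ c : Bool × Bool → ℝ × ℝ × ℝ,
    (∀ p, IsDiskEffect (c p)) ∧
    (∀ v : ℝ × ℝ, inDisk v → ∑ p : Bool × Bool, diskVal (c p) v = 1) ∧
    (∀ v : ℝ × ℝ, inDisk v → ∀ x : Bool,
      diskVal (c (x, true)) v + diskVal (c (x, false)) v
        = (1 + (if x then t else -t) * v.1) / 2) ∧
    (∀ v : ℝ × ℝ, inDisk v → ∀ y : Bool,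
      diskVal (c (true, y)) v + diskVal (c (false, y)) v
        = (1 + (if y then t else -t) * v.2) / 2)

def coeffs (G : Mat2) : ℝ × ℝ × ℝ :=
  ((G 0 0).re + (G 1 1).re, 2 * (G 0 1).re, -2 * (G 0 1).im)

def eff (c : ℝ × ℝ × ℝ) : Mat2 :=
  !![(c.1 : ℂ) / 2, ((c.2.1 : ℂ) - c.2.2 * Complex.I) / 2;
     ((c.2.1 : ℂ) + c.2.2 * Complex.I) / 2, (c.1 : ℂ) / 2]

lemma inDisk_iff (v : ℝ × ℝ) : inDisk v ↔ v.1 ^ 2 + v.2 ^ 2 ≤ 1 := by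
  unfold inDisk
  rw [Real.sqrt_le_iff]; simp

lemma coeffs_add (G H : Mat2) (v : ℝ × ℝ) :
    diskVal (coeffs G) v + diskVal (coeffs H) v = diskVal (coeffs (G + H)) v := by
  simp [diskVal, coeffs]; ring

lemma trace_re (G : Mat2) (hG : G.IsHermitian) (v : ℝ × ℝ) :
    (diskState v * G).trace.re = diskVal (coeffs G) v := by
  have h10 : G 1 0 = star (G 0 1) := (hG.apply 1 0).symm
  simp [diskVal, coeffs, diskState, sigma1, sigma2, Matrix.trace, Fin.sum_univ_two,
    Matrix.mul_apply, h10]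
  ring

lemma diskVal_nonneg (G : Mat2) (hG : G.PosSemidef) (v : ℝ × ℝ) (hv : inDisk v) :
    0 ≤ diskVal (coeffs G) v := by
  rw [inDisk_iff] at hv
  have h10 : G 1 0 = star (G 0 1) := (hG.1.apply 1 0).symm
  have h0 := hG.diag_nonneg (i := 0)
  have h1 := hG.diag_nonneg (i := 1)
  have hd := hG.det_nonneg
  rw [Matrix.det_fin_two, h10] at hd
  rw [Complex.le_def] at h0 h1 hd
  obtain ⟨h0, h0i⟩ := h0
  obtain ⟨h1, h1i⟩ := h1
  obtain ⟨hd, -⟩ := hd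
  simp at h0 h1 hd h0i h1i
  rw [← h0i] at hd
  simp only [diskVal, coeffs]
  set a := (G 0 0).re
  set d := (G 1 1).re
  set p := (G 0 1).re
  set q := (G 0 1).im
  have key : |2 * (p * v.1 - q * v.2)| ≤ a + d := by
    apply abs_le_of_sq_le_sq _ (by linarith)
    have e1 : (p * v.1 - q * v.2) ^ 2 ≤ (p ^ 2 + q ^ 2) * (v.1 ^ 2 + v.2 ^ 2) := by
      nlinarith [sq_nonneg (p * v.2 + q * v.1)]
    have e2 : (p ^ 2 + q ^ 2) * (v.1 ^ 2 + v.2 ^ 2) ≤ p ^ 2 + q ^ 2 :=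
      mul_le_of_le_one_right (by positivity) hv
    nlinarith [sq_nonneg (a - d)]
  have := (abs_le.1 key).1
  linarith

lemma cone (c : ℝ × ℝ × ℝ) (hc : IsDiskEffect c) (N a b : ℝ) (hN : 0 ≤ N)
    (h : a ^ 2 + b ^ 2 ≤ N ^ 2) : 0 ≤ c.1 * N + c.2.1 * a + c.2.2 * b := by
  rcases hN.eq_or_lt with rfl | hN
  · have ha : a = 0 := by nlinarith [sq_nonneg a, sq_nonneg b]
    have hb : b = 0 := by nlinarith [sq_nonneg a, sq_nonneg b]
    simp [ha, hb]
  · have := (hc (a / N, b / N) (by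
      rw [inDisk_iff]
      simp only [div_pow]
      rw [← add_div]
      exact div_le_one_of_le₀ h (by positivity))).1
    simp only [diskVal] at this
    have h2 : c.1 * N + c.2.1 * a + c.2.2 * b =
      2 * N * ((c.1 + c.2.1 * (a / N) + c.2.2 * (b / N)) / 2) := by field_simp
    rw [h2]
    positivity

lemma eff_psd (c : ℝ × ℝ × ℝ) (hc : IsDiskEffect c) : (eff c).PosSemidef := by
  apply Matrix.PosSemidef.of_dotProduct_mulVec_nonneg
  · ext i j
    fin_cases i <;> fin_cases j <;>
      simp [eff, Matrix.conjTranspose_apply, Complex.ext_iff]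
  · intro x
    have := cone c hc ((x 0).re ^ 2 + (x 0).im ^ 2 + (x 1).re ^ 2 + (x 1).im ^ 2)
      (2 * ((x 0).re * (x 1).re + (x 0).im * (x 1).im))
      (2 * ((x 0).re * (x 1).im - (x 0).im * (x 1).re)) (by positivity) (by
        nlinarith [sq_nonneg ((x 0).re ^ 2 + (x 0).im ^ 2 - (x 1).re ^ 2 - (x 1).im ^ 2)])
    rw [Complex.le_def]
    constructor
    · simp [eff, Matrix.mulVec, dotProduct, Fin.sum_univ_two]
      linarith
    · simp [eff, Matrix.mulVec, dotProduct, Fin.sum_univ_two]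
      ring

lemma full_of_disk (t : ℝ) (h : SDIncompat t → False) : ¬ DiskIncompat t := by
  unfold SDIncompat at h
  have h' := not_not.1 h
  obtain ⟨G, ⟨hp, hs⟩, hm⟩ := h'
  intro hD
  apply hD
  have hsum : ∀ v : ℝ × ℝ, ∑ p : Bool × Bool, diskVal (coeffs (G p)) v = 1 := by
    intro v
    have h1 : diskVal (coeffs (∑ p, G p)) v = 1 := by
      rw [hs]; simp [diskVal, coeffs]
    rw [← h1]
    simp only [Fintype.sum_prod_type, Fintype.sum_bool, coeffs_add]
  have hAx : ∀ v : ℝ × ℝ, ∀ x, (diskState v * Atx t x).trace.re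
      = (1 + (if x then t else -t) * v.1) / 2 := by
    intro v x
    cases x <;> simp [diskState, Atx, sigma1, sigma2, Matrix.trace, Fin.sum_univ_two,
      Matrix.mul_apply] <;> ring
  have hAy : ∀ v : ℝ × ℝ, ∀ x, (diskState v * Aty t x).trace.re
      = (1 + (if x then t else -t) * v.2) / 2 := by
    intro v x
    cases x <;> simp [diskState, Aty, sigma1, sigma2, Matrix.trace, Fin.sum_univ_two,
      Matrix.mul_apply] <;> ring
  refine ⟨fun p => coeffs (G p), ?_, fun v _ => hsum v, ?_, ?_⟩
  · intro p v hv
    refine ⟨diskVal_nonneg _ (hp p) v hv, ?_⟩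
    rw [← hsum v]
    exact Finset.single_le_sum (f := fun p => diskVal (coeffs (G p)) v)
      (fun q _ => diskVal_nonneg _ (hp q) v hv) (Finset.mem_univ p)
  · intro v hv x
    rw [coeffs_add, ← trace_re _ ((hp _).add (hp _)).1, (hm _ ⟨v, hv, rfl⟩).1 x, hAx]
  · intro v hv x
    rw [coeffs_add, ← trace_re _ ((hp _).add (hp _)).1, (hm _ ⟨v, hv, rfl⟩).2 x, hAy]

lemma full_of_disk' (t : ℝ) (h : ¬ DiskIncompat t) : ¬ FullIncompat t := by
  obtain ⟨c, he, -, hx, hy⟩ := not_not.1 h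
  intro hF
  apply hF
  have d0 : inDisk (0, 0) := by rw [inDisk_iff]; norm_num
  have d1 : inDisk (1, 0) := by rw [inDisk_iff]; norm_num
  have d2 : inDisk (0, 1) := by rw [inDisk_iff]; norm_num
  have mx : ∀ x, eff (c (x, true)) + eff (c (x, false)) = Atx t x := by
    intro x
    have h0 := hx _ d0 x
    have h1 := hx _ d1 x
    have h2 := hx _ d2 x
    simp only [diskVal] at h0 h1 h2
    cases x <;> simp at h0 h1 h2 <;> ext i j <;> fin_cases i <;> fin_cases j <;>
      simp [eff, Atx, sigma1, Complex.ext_iff] <;> (try constructor) <;> linarith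
  have my : ∀ x, eff (c (true, x)) + eff (c (false, x)) = Aty t x := by
    intro x
    have h0 := hy _ d0 x
    have h1 := hy _ d1 x
    have h2 := hy _ d2 x
    simp only [diskVal] at h0 h1 h2
    cases x <;> simp at h0 h1 h2 <;> ext i j <;> fin_cases i <;> fin_cases j <;>
      simp [eff, Aty, sigma2, Complex.ext_iff] <;> (try constructor) <;> linarith
  refine ⟨fun p => eff (c p), ⟨fun p => eff_psd _ (he p), ?_⟩, mx, my⟩
  simp only [Fintype.sum_prod_type, Fintype.sum_bool, mx]
  ext i j
  fin_cases i <;> fin_cases j <;> simp [Atx, sigma1] <;> norm_num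

lemma sd_of_full (t : ℝ) (h : ¬ FullIncompat t) : ¬ SDIncompat t := by
  obtain ⟨G, hG, hx, hy⟩ := not_not.1 h
  intro hS
  exact hS ⟨G, hG, fun ρ _ => ⟨fun x => by rw [hx], fun y => by rw [hy]⟩⟩

/-- Restriction to the equatorial disk is faithful for incompatibility:
full incompatibility ↔ `S_D`-incompatibility ↔ incompatibility of the restrictions as
disk observables. -/
theorem disk_restriction_faithful (t : ℝ) (ht0 : 0 ≤ t) (ht1 : t ≤ 1) :
    (FullIncompat t ↔ SDIncompat t) ∧ (SDIncompat t ↔ DiskIncompat t) := by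
  have a : DiskIncompat t → SDIncompat t := fun h => by
    by_contra hn
    exact full_of_disk t hn h
  have b : FullIncompat t → DiskIncompat t := fun h => by
    by_contra hn
    exact full_of_disk' t hn h
  have d : SDIncompat t → FullIncompat t := fun h => by
    by_contra hn
    exact sd_of_full t hn h
  exact ⟨⟨fun h => a (b h), d⟩, ⟨fun h => b (d h), a⟩⟩
end
end
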